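/- arXiv:2209.09945 — 3 statements merged into one kernel-verified Lean document; each statement's English description precedes it below -/
import Mathlib

section
/- Let (P,≤) be a finite poset with a coloring κ : P → C. For every order filter F of P and every color c ∈ C, one has R_c(S_c(F)) = R_c(F). -/
/-- `F` is an order filter of the poset `α`: upward closed subset. -/
def IsOrderFilter {α : Type*} [PartialOrder α] (F : Set α) : Prop :=
  ∀ ⦃x y : α⦄, x ∈ F → x ≤ y → y ∈ F

/-- `A_c(F)`: the union of all order filters `F'` with `F' \ F ⊆ κ⁻¹({c})`. -/
def Aop {α C : Type*} [PartialOrder α] (κ : α → C) (c : C) (F : Set α) : Set α :=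
  ⋃₀ {F' : Set α | IsOrderFilter F' ∧ F' \ F ⊆ κ ⁻¹' {c}}

/-- `R_c(F)`: the intersection of all order filters `F'` with `F \ F' ⊆ κ⁻¹({c})`. -/
def Rop {α C : Type*} [PartialOrder α] (κ : α → C) (c : C) (F : Set α) : Set α :=
  ⋂₀ {F' : Set α | IsOrderFilter F' ∧ F \ F' ⊆ κ ⁻¹' {c}}

open Classical in
/-- `S_c(F) := (A_c(F) \ F) ∪ R_c(F)` if this is an order filter, and `F` otherwise. -/
noncomputable def Sop {α C : Type*} [PartialOrder α] (κ : α → C) (c : C) (F : Set α) : Set α :=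
  if IsOrderFilter ((Aop κ c F \ F) ∪ Rop κ c F) then (Aop κ c F \ F) ∪ Rop κ c F else F

/-!
`R_c(F)` is the upper closure of the elements of `F` whose color is not `c`. Hence `R_c` is
idempotent and ignores elements of color `c`. Since `A_c(F) \ F` has only elements of color `c`,
applying `R_c` to `(A_c(F) \ F) ∪ R_c(F)` gives `R_c(R_c(F)) = R_c(F)`.
-/

section

variable {α C : Type*} [PartialOrder α]

theorem isOrderFilter_iff_isUpperSet {F : Set α} : IsOrderFilter F ↔ IsUpperSet F :=
  ⟨fun hF _ _ hxy hx => hF hx hxy, fun hF _ _ hx hxy => hF hxy hx⟩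

variable (κ : α → C) (c : C) (F : Set α)

theorem Aop_sdiff_subset_preimage : Aop κ c F \ F ⊆ κ ⁻¹' {c} := by
  rintro x ⟨⟨F', ⟨-, hF'⟩, hxF'⟩, hxF⟩
  exact hF' ⟨hxF', hxF⟩

theorem Rop_eq_upperClosure : Rop κ c F = upperClosure (F \ κ ⁻¹' {c}) := by
  apply Set.Subset.antisymm
  · exact Set.sInter_subset_of_mem ⟨isOrderFilter_iff_isUpperSet.2 (upperClosure _).upper,
      Set.sdiff_subset_comm.1 subset_upperClosure⟩
  · rintro x hx F' ⟨hF', hsdiff⟩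
    exact upperClosure_min (Set.sdiff_subset_comm.1 hsdiff) (isOrderFilter_iff_isUpperSet.1 hF') hx

variable {κ c} in
theorem Rop_union_of_subset_preimage {G : Set α} (hG : G ⊆ κ ⁻¹' {c}) :
    Rop κ c (G ∪ F) = Rop κ c F := by
  simp only [Rop_eq_upperClosure, Set.union_sdiff_distrib, Set.sdiff_eq_empty.2 hG, Set.empty_union]

theorem Rop_Rop : Rop κ c (Rop κ c F) = Rop κ c F := by
  simp only [Rop_eq_upperClosure]
  apply Set.Subset.antisymm
  · exact upperClosure_min Set.sdiff_subset (upperClosure _).upper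
  · exact upperClosure_anti fun x hx => ⟨subset_upperClosure hx, hx.2⟩

theorem Rop_Sop_eq_general : Rop κ c (Sop κ c F) = Rop κ c F := by
  unfold Sop
  split_ifs
  · rw [Rop_union_of_subset_preimage _ (Aop_sdiff_subset_preimage κ c F), Rop_Rop]
  · rfl

end

/-- For every order filter `F` of a finite colored poset and every color `c`,
`R_c(S_c(F)) = R_c(F)`. -/
theorem Rop_Sop_eq {α C : Type*} [PartialOrder α] [Fintype α] (κ : α → C) (c : C)
    (F : Set α) (hF : IsOrderFilter F) :
    Rop κ c (Sop κ c F) = Rop κ c F :=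
  Rop_Sop_eq_general κ c F
end

section
/- Fix integers n, m with 1 ≤ m ≤ n, let P := Y_{m,n−m+1} be the rectangular Young diagram poset, and let κ : P → {1,…,n}, κ((i,j)) := j − i + m, be its I-coloring. Then for all k ∈ {1,…,n−1} and every order filter F of P, S_k(S_{k+1}(S_k(F))) = S_{k+1}(S_k(S_{k+1}(F))). -/
/-- The rectangular Young diagram poset `Y_{m,N}` (cells `(i,j)`, `1 ≤ i ≤ m`,
`1 ≤ j ≤ N`, with `(i₁,j₁) ≤ (i₂,j₂)` iff `i₁ ≥ i₂` and `j₁ ≥ j₂`), realized as the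
product of two dual finite chains. -/
abbrev YD (m N : ℕ) := (Fin m)ᵒᵈ × (Fin N)ᵒᵈ

/-- The `I`-coloring of `Y_{m, n−m+1}` for type `A_n`: `κ((i,j)) = j − i + m`
(in 1-indexed coordinates), with values in `{1,…,n}`. -/
def ykappa (m N : ℕ) (x : YD m N) : ℤ :=
  ((OrderDual.ofDual x.2 : Fin N) : ℤ) - ((OrderDual.ofDual x.1 : Fin m) : ℤ) + m

section ColoredPoset

variable {α C : Type*} [PartialOrder α] {κ : α → C} {c : C} {F : Set α} {x : α}

theorem mem_Aop_iff : x ∈ Aop κ c F ↔ ∀ y, x ≤ y → y ∈ F ∨ κ y = c := by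
  constructor
  · rintro ⟨F', ⟨hF', hsub⟩, hx⟩ y hxy
    exact or_iff_not_imp_left.2 fun hy => hsub ⟨hF' hx hxy, hy⟩
  · intro h
    refine ⟨{z | ∀ y, z ≤ y → y ∈ F ∨ κ y = c}, ⟨?_, ?_⟩, h⟩
    · exact fun a b ha hab y hby => ha y (hab.trans hby)
    · exact fun z ⟨hz, hzF⟩ => (hz z le_rfl).resolve_left hzF

theorem mem_Rop_iff : x ∈ Rop κ c F ↔ ∃ y ≤ x, y ∈ F ∧ κ y ≠ c := by
  constructor
  · intro h
    refine h {z | ∃ y ≤ z, y ∈ F ∧ κ y ≠ c} ⟨?_, ?_⟩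
    · exact fun a b ⟨y, hya, hy⟩ hab => ⟨y, hya.trans hab, hy⟩
    · exact fun z ⟨hzF, hz⟩ => of_not_not fun hc => hz ⟨z, le_rfl, hzF, hc⟩
  · rintro ⟨y, hyx, hyF, hyc⟩ F' ⟨hF', hsub⟩
    exact hF' (of_not_not fun hy => hyc (hsub ⟨hyF, hy⟩)) hyx

theorem mem_Aop_diff_union_Rop_iff_of_ne (hF : IsOrderFilter F) (hx : κ x ≠ c) :
    x ∈ (Aop κ c F \ F) ∪ Rop κ c F ↔ x ∈ F := by
  constructor
  · rintro (⟨hA, -⟩ | hR)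
    · exact (mem_Aop_iff.1 hA x le_rfl).resolve_right hx
    · obtain ⟨y, hyx, hyF, -⟩ := mem_Rop_iff.1 hR
      exact hF hyF hyx
  · exact fun hxF => Or.inr (mem_Rop_iff.2 ⟨x, le_rfl, hxF, hx⟩)

end ColoredPoset

namespace YD

variable {m N : ℕ}

/-- The row of a cell, counted from `0` and valued in `ℤ` so that subtraction is harmless. -/
def row (x : YD m N) : ℤ := ((OrderDual.ofDual x.1 : Fin m) : ℤ)

/-- The column of a cell, counted from `0` and valued in `ℤ`. -/
def col (x : YD m N) : ℤ := ((OrderDual.ofDual x.2 : Fin N) : ℤ)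

theorem ykappa_eq (x : YD m N) : ykappa m N x = col x - row x + m := rfl

theorem le_iff {x y : YD m N} : x ≤ y ↔ row y ≤ row x ∧ col y ≤ col x := by
  simp only [row, col, Nat.cast_le]
  rfl

theorem row_nonneg (x : YD m N) : 0 ≤ row x := Int.natCast_nonneg _

theorem col_nonneg (x : YD m N) : 0 ≤ col x := Int.natCast_nonneg _

theorem row_lt (x : YD m N) : row x < m := Int.ofNat_lt.2 (OrderDual.ofDual x.1).isLt

theorem col_lt (x : YD m N) : col x < N := Int.ofNat_lt.2 (OrderDual.ofDual x.2).isLt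

theorem exists_row_col {i j : ℤ} (hi : 0 ≤ i) (him : i < m) (hj : 0 ≤ j) (hjN : j < N) :
    ∃ x : YD m N, row x = i ∧ col x = j :=
  ⟨(OrderDual.toDual ⟨i.toNat, by lia⟩, OrderDual.toDual ⟨j.toNat, by lia⟩),
    Int.toNat_of_nonneg hi, Int.toNat_of_nonneg hj⟩

theorem exists_above {x : YD m N} (hx : 0 < row x) :
    ∃ y : YD m N, x ≤ y ∧ row y = row x - 1 ∧ ykappa m N y = ykappa m N x + 1 := by
  obtain ⟨y, hrow, hcol⟩ := exists_row_col (m := m) (N := N) (i := row x - 1) (j := col x)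
    (by lia) (by linarith [row_lt x]) (col_nonneg x) (col_lt x)
  exact ⟨y, le_iff.2 (by lia), hrow, by rw [ykappa_eq, ykappa_eq]; lia⟩

theorem exists_left {x : YD m N} (hx : 0 < col x) :
    ∃ y : YD m N, x ≤ y ∧ row y = row x ∧ ykappa m N y = ykappa m N x - 1 := by
  obtain ⟨y, hrow, hcol⟩ := exists_row_col (m := m) (N := N) (i := row x) (j := col x - 1)
    (row_nonneg x) (row_lt x) (by lia) (by linarith [col_lt x])
  exact ⟨y, le_iff.2 (by lia), hrow, by rw [ykappa_eq, ykappa_eq]; lia⟩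

theorem exists_below {x : YD m N} (hx : row x + 1 < m) :
    ∃ y : YD m N, y ≤ x ∧ row y = row x + 1 ∧ ykappa m N y = ykappa m N x - 1 := by
  obtain ⟨y, hrow, hcol⟩ := exists_row_col (m := m) (N := N) (i := row x + 1) (j := col x)
    (by linarith [row_nonneg x]) hx (col_nonneg x) (col_lt x)
  exact ⟨y, le_iff.2 (by lia), hrow, by rw [ykappa_eq, ykappa_eq]; lia⟩

theorem exists_right {x : YD m N} (hx : col x + 1 < N) :
    ∃ y : YD m N, y ≤ x ∧ row y = row x ∧ ykappa m N y = ykappa m N x + 1 := by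
  obtain ⟨y, hrow, hcol⟩ := exists_row_col (m := m) (N := N) (i := row x) (j := col x + 1)
    (row_nonneg x) (row_lt x) (by linarith [col_nonneg x]) hx
  exact ⟨y, le_iff.2 (by lia), hrow, by rw [ykappa_eq, ykappa_eq]; lia⟩

end YD

/-- The simple reflection of type `A` at node `c`, acting on sequences `h` that record the
coefficients of the simple roots up to a fixed shift. -/
def reflect {G : Type*} [AddCommGroup G] (c : ℤ) (h : ℤ → G) : ℤ → G :=
  Function.update h c (h (c - 1) + h (c + 1) - h c)

theorem reflect_self {G : Type*} [AddCommGroup G] (c : ℤ) (h : ℤ → G) :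
    reflect c h c = h (c - 1) + h (c + 1) - h c :=
  Function.update_self ..

theorem reflect_of_ne {G : Type*} [AddCommGroup G] {c d : ℤ} (hd : d ≠ c) (h : ℤ → G) :
    reflect c h d = h d :=
  Function.update_of_ne hd ..

theorem reflect_braid {G : Type*} [AddCommGroup G] (c : ℤ) (h : ℤ → G) :
    reflect c (reflect (c + 1) (reflect c h)) =
      reflect (c + 1) (reflect c (reflect (c + 1) h)) := by
  have hne : c ≠ c + 1 := by lia
  have hpred : c - 1 ≠ c ∧ c - 1 ≠ c + 1 := by lia
  have hsucc : c + 1 + 1 ≠ c ∧ c + 1 + 1 ≠ c + 1 := by lia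
  funext d
  rcases eq_or_ne d c with rfl | hd
  · simp only [reflect_self, reflect_of_ne hne, reflect_of_ne hne.symm, reflect_of_ne hpred.1,
      reflect_of_ne hpred.2, reflect_of_ne hsucc.1, add_sub_cancel_right]
    abel
  rcases eq_or_ne d (c + 1) with rfl | hd'
  · simp only [reflect_self, reflect_of_ne hne, reflect_of_ne hne.symm, reflect_of_ne hpred.2,
      reflect_of_ne hsucc.1, reflect_of_ne hsucc.2, add_sub_cancel_right]
    abel
  · simp only [reflect_of_ne hd, reflect_of_ne hd']

/-- `h` describes a lattice path from the lower left to the upper right corner of the `m × N`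
rectangle: the path meets the diagonal `j - i + m = c` in row `h c`. A step to the next diagonal
goes right (`h` is unchanged) or up (`h` drops by `1`). Only the values `h c` with
`0 ≤ c ≤ m + N` are meaningful; the others are merely carried along. -/
structure IsLatticePath (m N : ℕ) (h : ℤ → ℤ) : Prop where
  antitone : Antitone h
  monotone_add : Monotone fun c => h c + c
  left_end : h 0 = m
  right_end : h (m + N) = 0

namespace IsLatticePath

variable {m N : ℕ} {h : ℤ → ℤ} {c : ℤ}

theorem of_steps (hstep : ∀ c, h (c + 1) ≤ h c ∧ h c ≤ h (c + 1) + 1) (hleft : h 0 = m)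
    (hright : h (m + N) = 0) : IsLatticePath m N h where
  antitone := antitone_int_of_succ_le fun c => (hstep c).1
  monotone_add := monotone_int_of_le_succ fun c => by linarith [(hstep c).2]
  left_end := hleft
  right_end := hright

theorem step (hh : IsLatticePath m N h) (c : ℤ) : h (c + 1) ≤ h c ∧ h c ≤ h (c + 1) + 1 := by
  have hmono : h c + c ≤ h (c + 1) + (c + 1) := hh.monotone_add (by lia)
  exact ⟨hh.antitone (by lia), by lia⟩

theorem step_pred (hh : IsLatticePath m N h) (c : ℤ) : h c ≤ h (c - 1) ∧ h (c - 1) ≤ h c + 1 := by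
  simpa only [sub_add_cancel] using hh.step (c - 1)

theorem apply_le (hh : IsLatticePath m N h) (hc : 0 ≤ c) : h c ≤ m :=
  hh.left_end ▸ hh.antitone hc

theorem le_apply_add (hh : IsLatticePath m N h) (hc : 0 ≤ c) : m ≤ h c + c := by
  simpa only [hh.left_end, add_zero] using hh.monotone_add hc

theorem apply_nonneg (hh : IsLatticePath m N h) (hc : c ≤ m + N) : 0 ≤ h c :=
  hh.right_end ▸ hh.antitone hc

theorem apply_add_le (hh : IsLatticePath m N h) (hc : c ≤ m + N) : h c + c ≤ m + N := by
  simpa only [hh.right_end, zero_add] using hh.monotone_add hc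

theorem reflect (hh : IsLatticePath m N h) (hc : 0 < c) (hcN : c < m + N) :
    IsLatticePath m N (reflect c h) := by
  refine of_steps (fun d => ?_) ?_ ?_
  · have hstep := hh.step d
    have hsucc := hh.step (d + 1)
    have hpred := hh.step_pred d
    rcases eq_or_ne d c with rfl | hd
    · rw [reflect_self, reflect_of_ne (by lia)]
      lia
    rcases eq_or_ne (d + 1) c with rfl | hd'
    · rw [reflect_self, reflect_of_ne hd, add_sub_cancel_right]
      lia
    · rwa [reflect_of_ne hd, reflect_of_ne hd']
  · rw [reflect_of_ne hc.ne, hh.left_end]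
  · rw [reflect_of_ne hcN.ne', hh.right_end]

end IsLatticePath

/-- The lattice path `h` is the boundary of `F`: the set `F` consists of the cells of the
rectangle that lie above and to the left of the path. -/
structure IsBoundary {m N : ℕ} (F : Set (YD m N)) (h : ℤ → ℤ) : Prop
    extends IsLatticePath m N h where
  mem_iff : ∀ x, x ∈ F ↔ YD.row x < h (ykappa m N x)

/-- Row `i` of the diagonal of color `c` lies beyond the cells of `F`. The least such `i` is where
the boundary of `F` crosses the diagonal. The conditions `0 ≤ i` and `m - c ≤ i` say that the cell
of row `i` and color `c` is not above or to the left of the rectangle. -/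
structure IsBeyond {m N : ℕ} (F : Set (YD m N)) (c i : ℤ) : Prop where
  row_nonneg : 0 ≤ i
  col_nonneg : m - c ≤ i
  row_lt : ∀ x ∈ F, ykappa m N x = c → YD.row x < i

namespace IsBeyond

variable {m N : ℕ} {F : Set (YD m N)} {c i : ℤ}

theorem exists_least (F : Set (YD m N)) (c : ℤ) :
    ∃ i, IsBeyond F c i ∧ ∀ i', IsBeyond F c i' → i ≤ i' :=
  Int.exists_least_of_bdd ⟨0, fun _ hi => hi.row_nonneg⟩
    ⟨max m (m - c), by lia, by lia, fun x _ _ => (YD.row_lt x).trans_le (le_max_left _ _)⟩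

theorem succ (hF : IsOrderFilter F) (hi : IsBeyond F c i) : IsBeyond F (c + 1) i := by
  refine ⟨hi.row_nonneg, by linarith [hi.col_nonneg], fun x hxF hx => ?_⟩
  rcases (YD.col_nonneg x).eq_or_lt with hcol | hcol
  · linarith [hi.col_nonneg, YD.ykappa_eq x]
  · obtain ⟨y, hxy, hy, hyc⟩ := YD.exists_left hcol
    exact hy ▸ hi.row_lt y (hF hxF hxy) (by lia)

theorem pred (hF : IsOrderFilter F) (hi : IsBeyond F (c + 1) i) : IsBeyond F c (i + 1) := by
  refine ⟨by linarith [hi.row_nonneg], by linarith [hi.col_nonneg], fun x hxF hx => ?_⟩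
  rcases (YD.row_nonneg x).eq_or_lt with hrow | hrow
  · linarith [hi.row_nonneg]
  · obtain ⟨y, hxy, hy, hyc⟩ := YD.exists_above hrow
    linarith [hi.row_lt y (hF hxF hxy) (by lia)]

theorem left_end (F : Set (YD m N)) : IsBeyond F 0 m :=
  ⟨Int.natCast_nonneg m, (sub_zero _).le, fun x _ _ => YD.row_lt x⟩

theorem right_end (F : Set (YD m N)) : IsBeyond F (m + N) 0 := by
  refine ⟨le_rfl, by lia, fun x _ hx => ?_⟩
  linarith [YD.ykappa_eq x, YD.row_nonneg x, YD.col_lt x]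

theorem of_notMem (hF : IsOrderFilter F) {x : YD m N} (hx : x ∉ F) :
    IsBeyond F (ykappa m N x) (YD.row x) := by
  refine ⟨YD.row_nonneg x, by linarith [YD.ykappa_eq x, YD.col_nonneg x], fun y hyF hy => ?_⟩
  by_contra! hxy
  rw [YD.ykappa_eq, YD.ykappa_eq] at hy
  exact hx (hF hyF (YD.le_iff.2 ⟨hxy, by lia⟩))

end IsBeyond

theorem IsOrderFilter.exists_isBoundary {m N : ℕ} {F : Set (YD m N)} (hF : IsOrderFilter F) :
    ∃ h, IsBoundary F h := by
  choose h hbeyond hleast using IsBeyond.exists_least F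
  have hpath : IsLatticePath m N h := IsLatticePath.of_steps
    (fun c => ⟨hleast _ _ ((hbeyond c).succ hF), hleast _ _ ((hbeyond (c + 1)).pred hF)⟩)
    ((hleast _ _ (IsBeyond.left_end F)).antisymm
      (by simpa only [sub_zero] using (hbeyond 0).col_nonneg))
    ((hleast _ _ (IsBeyond.right_end F)).antisymm (hbeyond _).row_nonneg)
  refine ⟨h, hpath, fun x => ⟨fun hx => (hbeyond _).row_lt x hx rfl, fun hx => ?_⟩⟩
  by_contra hxF
  exact hx.not_ge (hleast _ _ (IsBeyond.of_notMem hF hxF))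

namespace IsBoundary

variable {m N : ℕ} {F G : Set (YD m N)} {h : ℤ → ℤ} {c : ℤ} {x : YD m N}

theorem unique (hF : IsBoundary F h) (hG : IsBoundary G h) : F = G :=
  Set.ext fun x => (hF.mem_iff x).trans (hG.mem_iff x).symm

theorem isOrderFilter (hF : IsBoundary F h) : IsOrderFilter F := by
  intro x y hx hxy
  rw [hF.mem_iff] at hx ⊢
  obtain ⟨hrow, hcol⟩ := YD.le_iff.1 hxy
  rcases le_total (ykappa m N y) (ykappa m N x) with hκ | hκ
  · linarith [hF.antitone hκ]
  · have hmono : h (ykappa m N x) + ykappa m N x ≤ h (ykappa m N y) + ykappa m N y :=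
      hF.monotone_add hκ
    linarith [YD.ykappa_eq x, YD.ykappa_eq y]

theorem mem_Aop_iff (hF : IsBoundary F h) (hc : 0 < c) (hcN : c < m + N)
    (hx : ykappa m N x = c) :
    x ∈ Aop (ykappa m N) c F ↔ YD.row x ≤ h (c + 1) ∧ YD.row x < h (c - 1) := by
  have hxc := YD.ykappa_eq x
  rw [_root_.mem_Aop_iff]
  refine ⟨fun hA => ⟨?_, ?_⟩, fun ⟨habove, hleft⟩ y hxy => ?_⟩
  · rcases (YD.row_nonneg x).eq_or_lt with hrow | hrow
    · exact hrow ▸ hF.apply_nonneg (by lia)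
    · obtain ⟨y, hxy, hy, hyc⟩ := YD.exists_above hrow
      have hyF := (hF.mem_iff y).1 ((hA y hxy).resolve_right (by lia))
      rw [hyc, hx] at hyF
      lia
  · rcases (YD.col_nonneg x).eq_or_lt with hcol | hcol
    · linarith [hF.le_apply_add (c := c - 1) (by lia)]
    · obtain ⟨y, hxy, hy, hyc⟩ := YD.exists_left hcol
      have hyF := (hF.mem_iff y).1 ((hA y hxy).resolve_right (by lia))
      rwa [hyc, hx, hy] at hyF
  · have hyc := YD.ykappa_eq y
    obtain ⟨hrow, hcol⟩ := YD.le_iff.1 hxy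
    rw [hF.mem_iff]
    rcases lt_trichotomy (ykappa m N y) c with hlt | heq | hgt
    · left
      linarith [hF.antitone (Int.le_sub_one_of_lt hlt), hleft]
    · exact Or.inr heq
    · left
      have hmono : h (c + 1) + (c + 1) ≤ h (ykappa m N y) + ykappa m N y := hF.monotone_add hgt
      linarith [habove]

theorem mem_Rop_iff (hF : IsBoundary F h) (hc : 0 < c) (hcN : c < m + N)
    (hx : ykappa m N x = c) :
    x ∈ Rop (ykappa m N) c F ↔ YD.row x < h (c + 1) ∨ YD.row x + 1 < h (c - 1) := by
  have hxc := YD.ykappa_eq x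
  rw [_root_.mem_Rop_iff]
  constructor
  · rintro ⟨y, hyx, hyF, hne⟩
    have hyc := YD.ykappa_eq y
    rw [hF.mem_iff] at hyF
    obtain ⟨hrow, hcol⟩ := YD.le_iff.1 hyx
    rcases hne.lt_or_gt with hlt | hgt
    · right
      have hmono : h (ykappa m N y) + ykappa m N y ≤ h (c - 1) + (c - 1) :=
        hF.monotone_add (Int.le_sub_one_of_lt hlt)
      lia
    · left
      linarith [hF.antitone (Int.add_one_le_of_lt hgt)]
  · rintro (hright | hbelow)
    · obtain ⟨y, hyx, hy, hyc⟩ := YD.exists_right (x := x)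
        (by linarith [hF.apply_add_le (c := c + 1) (by lia)])
      refine ⟨y, hyx, (hF.mem_iff y).2 ?_, by lia⟩
      rwa [hyc, hx, hy]
    · obtain ⟨y, hyx, hy, hyc⟩ := YD.exists_below (x := x)
        (by linarith [hF.apply_le (c := c - 1) (by lia)])
      refine ⟨y, hyx, (hF.mem_iff y).2 ?_, by lia⟩
      rwa [hyc, hx, hy]

theorem Aop_diff_union_Rop (hF : IsBoundary F h) (hc : 0 < c) (hcN : c < m + N) :
    IsBoundary ((Aop (ykappa m N) c F \ F) ∪ Rop (ykappa m N) c F) (reflect c h) where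
  toIsLatticePath := hF.reflect hc hcN
  mem_iff x := by
    rcases eq_or_ne (ykappa m N x) c with hx | hx
    · rw [Set.mem_union, Set.mem_sdiff, hF.mem_Aop_iff hc hcN hx, hF.mem_Rop_iff hc hcN hx,
        hF.mem_iff, hx, reflect_self]
      have hsucc := hF.step c
      have hpred := hF.step_pred c
      lia
    · rw [mem_Aop_diff_union_Rop_iff_of_ne hF.isOrderFilter hx, hF.mem_iff,
        reflect_of_ne hx]

theorem Sop (hF : IsBoundary F h) (hc : 0 < c) (hcN : c < m + N) :
    IsBoundary (Sop (ykappa m N) c F) (reflect c h) := by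
  have hS := hF.Aop_diff_union_Rop hc hcN
  rwa [_root_.Sop, if_pos hS.isOrderFilter]

end IsBoundary

/-- Braid relation: for a color `k ∈ {1,…,n−1}` and any order filter `F` of
`Y_{m,n−m+1}`, `S_k(S_{k+1}(S_k(F))) = S_{k+1}(S_k(S_{k+1}(F)))`. -/
theorem Sop_braid (n m : ℕ) (hm : 1 ≤ m) (hmn : m ≤ n)
    (k : ℤ) (hk1 : 1 ≤ k) (hkn : k + 1 ≤ n)
    (F : Set (YD m (n - m + 1))) (hF : IsOrderFilter F) :
    Sop (ykappa m (n - m + 1)) k (Sop (ykappa m (n - m + 1)) (k + 1)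
        (Sop (ykappa m (n - m + 1)) k F)) =
      Sop (ykappa m (n - m + 1)) (k + 1) (Sop (ykappa m (n - m + 1)) k
        (Sop (ykappa m (n - m + 1)) (k + 1) F)) := by
  obtain ⟨h, hh⟩ := hF.exists_isBoundary
  have hk : 0 < k := by lia
  have hkN : k < m + (n - m + 1 : ℕ) := by lia
  have hk' : 0 < k + 1 := by lia
  have hkN' : k + 1 < m + (n - m + 1 : ℕ) := by lia
  have hleft := ((hh.Sop hk hkN).Sop hk' hkN').Sop hk hkN
  have hright := ((hh.Sop hk' hkN').Sop hk hkN).Sop hk' hkN'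
  rw [reflect_braid] at hleft
  exact hleft.unique hright
end

section
/- Fix integers n, m with 1 ≤ m ≤ n and let P := Y_{m,n−m+1} with I-coloring κ((i,j)) := j − i + m and J-coloring κ̃((i,j)) := the orbit of κ((i,j)) under k ↦ n+1−k. Let k be an integer with 1 ≤ k and k + 2 ≤ n+1−k, and set p := {k, n+1−k} ∈ J (a two-element orbit satisfying the orthogonality condition). Then for every order filter F of P, S̃_p(F) = S_k(S_{n+1−k}(F)) = S_{n+1−k}(S_k(F)). -/
/-- The `J`-coloring of `Y_{m, n−m+1}`: the orbit of the color `κ((i,j)) = j − i + m`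
under the Dynkin diagram involution `k ↦ n+1−k`, encoded by its minimal element, i.e.
`κ̃((i,j)) = min{ j−i+m , i−j+n−m+1 }`. -/
def ytkappa (n m N : ℕ) (x : YD m N) : ℤ :=
  min (ykappa m N x) ((n : ℤ) + 1 - ykappa m N x)

/-!
Call a set separated if no element of it covers another. On a filter `F`, the operator `S_c` of a
separated colour class toggles, simultaneously, the membership of all `x` of colour `c` such that
everything above `x` lies in `F` and nothing below `x` does. For `x` in a separated set this
condition can be tested on elements outside the set. Hence, when the union of two colour classes is
separated, toggling at one class does not change which elements of the other are toggled, and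
toggling at both, in either order, is toggling at the union. In the rectangle, the colours of an
element and of one covering it differ by exactly one, so two colours that are not consecutive
integers have classes with separated union.
-/

open scoped symmDiff

section Toggle

variable {α C C' : Type*} [PartialOrder α] {D E F G : Set α} {x : α}

/-- `D` is separated: no element of `D` is next to another one in the order. Intermediate elements
outside `D` replace covering relations, which may be absent in a general poset. -/
def IsOrderSeparated (D : Set α) : Prop :=
  ∀ ⦃x y : α⦄, x ∈ D → y ∈ D → x < y → ∃ z ∉ D, x < z ∧ z < y

/-- `x` can be toggled in the order filter `F`: both `F ∪ {x}` and `F \ {x}` are order filters. The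
condition is blind to whether `x ∈ F`, so that adding and removing `x` are treated alike. -/
def IsToggleable (F : Set α) (x : α) : Prop :=
  (∀ ⦃y⦄, x < y → y ∈ F) ∧ ∀ ⦃y⦄, y < x → y ∉ F

/-- Simultaneous toggling of `F` at all toggleable elements of `D`. -/
def toggle (D F : Set α) : Set α :=
  F ∆ (D ∩ {x | IsToggleable F x})

theorem isOrderSeparated_of_forall_not_covBy [IsStronglyAtomic α]
    (h : ∀ x ∈ D, ∀ y ∈ D, ¬ x ⋖ y) : IsOrderSeparated D := by
  intro x y hx hy hxy
  obtain ⟨z, hxz, hzy⟩ := exists_covBy_le_of_lt hxy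
  have hz : z ∉ D := fun hz ↦ h x hx z hz hxz
  exact ⟨z, hz, hxz.lt, hzy.lt_of_ne fun hzy ↦ hz (hzy ▸ hy)⟩

theorem IsOrderSeparated.mono (hD : IsOrderSeparated D) (hED : E ⊆ D) : IsOrderSeparated E := by
  intro x y hx hy hxy
  obtain ⟨z, hz, hxzy⟩ := hD (hED hx) (hED hy) hxy
  exact ⟨z, fun hzE ↦ hz (hED hzE), hxzy⟩

theorem IsOrderSeparated.isToggleable_iff (hD : IsOrderSeparated D) (hF : IsOrderFilter F)
    (hx : x ∈ D) :
    IsToggleable F x ↔ (∀ z ∉ D, x < z → z ∈ F) ∧ ∀ z ∉ D, z < x → z ∉ F := by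
  refine ⟨fun h ↦ ⟨fun z _ hz ↦ h.1 hz, fun z _ hz ↦ h.2 hz⟩, fun ⟨habove, hbelow⟩ ↦ ⟨?_, ?_⟩⟩
  · intro y hxy
    by_cases hy : y ∈ D
    · obtain ⟨z, hz, hxz, hzy⟩ := hD hx hy hxy
      exact hF (habove z hz hxz) hzy.le
    · exact habove y hy hxy
  · intro y hyx hyF
    by_cases hy : y ∈ D
    · obtain ⟨z, hz, hyz, hzx⟩ := hD hy hx hyx
      exact hbelow z hz hzx (hF hyF hyz.le)
    · exact hbelow y hy hyx hyF

theorem IsOrderSeparated.isToggleable_congr (hD : IsOrderSeparated D) (hF : IsOrderFilter F)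
    (hG : IsOrderFilter G) (hFG : ∀ z ∉ D, z ∈ F ↔ z ∈ G) (hx : x ∈ D) :
    IsToggleable F x ↔ IsToggleable G x := by
  rw [hD.isToggleable_iff hF hx, hD.isToggleable_iff hG hx]
  refine and_congr (forall₂_congr fun z hz ↦ ?_) (forall₂_congr fun z hz ↦ ?_) <;>
    rw [hFG z hz]

theorem IsToggleable.isOrderFilter_insert (hx : IsToggleable F x) (hF : IsOrderFilter F) :
    IsOrderFilter (insert x F) := by
  rintro a b (rfl | ha) hab
  · exact hab.eq_or_lt.imp Eq.symm (hx.1 ·)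
  · exact Or.inr (hF ha hab)

theorem IsToggleable.isOrderFilter_sdiff_singleton (hx : IsToggleable F x) (hF : IsOrderFilter F) :
    IsOrderFilter (F \ {x}) := by
  rintro a b ⟨ha, hax⟩ hab
  refine ⟨hF ha hab, ?_⟩
  rintro rfl
  exact hx.2 (hab.lt_of_ne hax) ha

theorem mem_toggle_iff_of_notMem (hx : x ∉ D) : x ∈ toggle D F ↔ x ∈ F := by
  simp [toggle, Set.mem_symmDiff, hx]

theorem IsOrderSeparated.isOrderFilter_toggle (hD : IsOrderSeparated D) (hF : IsOrderFilter F) :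
    IsOrderFilter (toggle D F) := by
  intro x y hx hxy
  obtain rfl | hxy := hxy.eq_or_lt
  · exact hx
  obtain ⟨hxF, -⟩ | ⟨⟨hxD, hxT⟩, -⟩ := hx
  · exact Or.inl ⟨hF hxF hxy.le, fun ⟨_, hyT⟩ ↦ hyT.2 hxy hxF⟩
  · refine Or.inl ⟨hxT.1 hxy, fun ⟨hyD, hyT⟩ ↦ ?_⟩
    obtain ⟨z, -, hxz, hzy⟩ := hD hxD hyD hxy
    exact hyT.2 hzy (hxT.1 hxz)

theorem toggle_toggle (hsep : IsOrderSeparated (D ∪ E)) (hDE : Disjoint D E)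
    (hF : IsOrderFilter F) : toggle D (toggle E F) = toggle (D ∪ E) F := by
  have hEF : IsOrderFilter (toggle E F) :=
    (hsep.mono Set.subset_union_right).isOrderFilter_toggle hF
  have hagree : ∀ z ∉ D ∪ E, z ∈ toggle E F ↔ z ∈ F := fun z hz ↦
    mem_toggle_iff_of_notMem fun hzE ↦ hz (Or.inr hzE)
  have hstable : D ∩ {x | IsToggleable (toggle E F) x} = D ∩ {x | IsToggleable F x} :=
    Set.ext fun x ↦ and_congr_right fun hx ↦ hsep.isToggleable_congr hEF hF hagree (Or.inl hx)
  have hunion : (E ∩ {x | IsToggleable F x}) ∆ (D ∩ {x | IsToggleable F x}) =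
      E ∩ {x | IsToggleable F x} ∪ D ∩ {x | IsToggleable F x} :=
    (hDE.symm.mono Set.inter_subset_left Set.inter_subset_left).symmDiff_eq_sup
  calc toggle D (toggle E F)
      = F ∆ (E ∩ {x | IsToggleable F x}) ∆ (D ∩ {x | IsToggleable F x}) := by
        rw [toggle, hstable, toggle]
    _ = F ∆ (E ∩ {x | IsToggleable F x} ∪ D ∩ {x | IsToggleable F x}) := by
        rw [symmDiff_assoc, hunion]
    _ = toggle (D ∪ E) F := by
        rw [← Set.union_inter_distrib_right, Set.union_comm, toggle]

theorem Aop_sdiff_eq (κ : α → C) (c : C) (hsep : IsOrderSeparated (κ ⁻¹' {c}))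
    (hF : IsOrderFilter F) : Aop κ c F \ F = (κ ⁻¹' {c} ∩ {x | IsToggleable F x}) \ F := by
  ext x
  refine and_congr_left fun hxF ↦ ⟨?_, fun ⟨hxc, hxT⟩ ↦ ?_⟩
  · rintro ⟨F', ⟨hF', hsub⟩, hxF'⟩
    have hxc : x ∈ κ ⁻¹' {c} := hsub ⟨hxF', hxF⟩
    refine ⟨hxc, (hsep.isToggleable_iff hF hxc).2 ⟨fun z hzc hxz ↦ ?_, fun z _ hzx hzF ↦ ?_⟩⟩
    · by_contra hzF
      exact hzc (hsub ⟨hF' hxF' hxz.le, hzF⟩)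
    · exact hxF (hF hzF hzx.le)
  · refine ⟨insert x F, ⟨hxT.isOrderFilter_insert hF, ?_⟩, Set.mem_insert x F⟩
    rintro y ⟨rfl | hyF, hyF'⟩
    exacts [hxc, absurd hyF hyF']

theorem Rop_eq (κ : α → C) (c : C) (hsep : IsOrderSeparated (κ ⁻¹' {c}))
    (hF : IsOrderFilter F) : Rop κ c F = F \ (κ ⁻¹' {c} ∩ {x | IsToggleable F x}) := by
  ext x
  refine ⟨fun hx ↦ ⟨hx F ⟨hF, by simp⟩, fun ⟨hxc, hxT⟩ ↦ ?_⟩, ?_⟩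
  · have hsub : F \ (F \ {x}) ⊆ κ ⁻¹' {c} :=
      Set.sdiff_subset_comm.2 (Set.sdiff_subset_sdiff_right (Set.singleton_subset_iff.2 hxc))
    exact (hx (F \ {x}) ⟨hxT.isOrderFilter_sdiff_singleton hF, hsub⟩).2 rfl
  · rintro ⟨hxF, hxT⟩ F' ⟨hF', hsub⟩
    by_contra hxF'
    have hxc : x ∈ κ ⁻¹' {c} := hsub ⟨hxF, hxF'⟩
    refine hxT ⟨hxc, (hsep.isToggleable_iff hF hxc).2
      ⟨fun z _ hxz ↦ hF hxF hxz.le, fun z hzc hzx hzF ↦ ?_⟩⟩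
    exact hzc (hsub ⟨hzF, fun hzF' ↦ hxF' (hF' hzF' hzx.le)⟩)

theorem Sop_eq_toggle (κ : α → C) (c : C) (hsep : IsOrderSeparated (κ ⁻¹' {c}))
    (hF : IsOrderFilter F) : Sop κ c F = toggle (κ ⁻¹' {c}) F := by
  have htoggle : (Aop κ c F \ F) ∪ Rop κ c F = toggle (κ ⁻¹' {c}) F := by
    rw [Aop_sdiff_eq κ c hsep hF, Rop_eq κ c hsep hF, Set.union_comm, toggle, Set.symmDiff_def]
  rw [Sop, htoggle, if_pos (hsep.isOrderFilter_toggle hF)]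

theorem Sop_Sop_eq_toggle (κ : α → C) {c d : C} (hcd : c ≠ d)
    (hsep : IsOrderSeparated (κ ⁻¹' {c} ∪ κ ⁻¹' {d})) (hF : IsOrderFilter F) :
    Sop κ c (Sop κ d F) = toggle (κ ⁻¹' {c} ∪ κ ⁻¹' {d}) F := by
  have hc : IsOrderSeparated (κ ⁻¹' {c}) := hsep.mono Set.subset_union_left
  have hd : IsOrderSeparated (κ ⁻¹' {d}) := hsep.mono Set.subset_union_right
  have hdisj : Disjoint (κ ⁻¹' {c}) (κ ⁻¹' {d}) :=
    (Set.disjoint_singleton.2 hcd).preimage κ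
  rw [Sop_eq_toggle κ d hd hF, Sop_eq_toggle κ c hc (hd.isOrderFilter_toggle hF),
    toggle_toggle hsep hdisj hF]

theorem Sop_fold_orth_general (κ : α → C) (κ' : α → C') {c d : C} {p : C'} (hcd : c ≠ d)
    (hp : κ' ⁻¹' {p} = κ ⁻¹' {c} ∪ κ ⁻¹' {d})
    (hsep : IsOrderSeparated (κ ⁻¹' {c} ∪ κ ⁻¹' {d})) (hF : IsOrderFilter F) :
    Sop κ' p F = Sop κ c (Sop κ d F) ∧ Sop κ' p F = Sop κ d (Sop κ c F) := by
  rw [Sop_eq_toggle κ' p (hp ▸ hsep) hF, hp, Sop_Sop_eq_toggle κ hcd hsep hF]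
  rw [Set.union_comm] at hsep ⊢
  exact ⟨rfl, (Sop_Sop_eq_toggle κ hcd.symm hsep hF).symm⟩

end Toggle

section Rectangle

variable {m N : ℕ}

theorem abs_ykappa_sub_ykappa_of_covBy {x y : YD m N} (h : x ⋖ y) :
    |ykappa m N y - ykappa m N x| = 1 := by
  obtain ⟨hcov, heq⟩ | ⟨hcov, heq⟩ := Prod.covBy_iff.1 h <;>
    rw [← ofDual_covBy_ofDual_iff, Fin.covBy_iff, Nat.covBy_iff_add_one_eq] at hcov <;>
    rw [ykappa, ykappa, heq, ← hcov] <;> simp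

theorem isOrderSeparated_preimage_ykappa {S : Set ℤ} (hS : ∀ a ∈ S, a + 1 ∉ S) :
    IsOrderSeparated (ykappa m N ⁻¹' S) := by
  refine isOrderSeparated_of_forall_not_covBy fun x hx y hy hxy ↦ ?_
  rcases (abs_eq zero_le_one).1 (abs_ykappa_sub_ykappa_of_covBy hxy) with h | h
  · exact hS _ hx (by rwa [← h, add_sub_cancel])
  · exact hS _ hy (by rwa [show ykappa m N y + 1 = ykappa m N x by lia])

theorem ytkappa_preimage_singleton {n : ℕ} {k : ℤ} (hk : k ≤ (n : ℤ) + 1 - k) :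
    ytkappa n m N ⁻¹' {k} = ykappa m N ⁻¹' {k} ∪ ykappa m N ⁻¹' {(n : ℤ) + 1 - k} := by
  ext x
  simp only [ytkappa, Set.mem_union, Set.mem_preimage, Set.mem_singleton_iff]
  lia

theorem isOrderSeparated_preimage_ykappa_pair {a b : ℤ} (hab : a + 2 ≤ b) :
    IsOrderSeparated (ykappa m N ⁻¹' {a} ∪ ykappa m N ⁻¹' {b}) := by
  rw [← Set.preimage_union]
  refine isOrderSeparated_preimage_ykappa ?_
  simp only [Set.mem_union, Set.mem_singleton_iff]
  lia

end Rectangle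

/-- For a two-element orbit `p = {k, n+1−k}` (with `1 ≤ k` and `k+2 ≤ n+1−k`, so `p`
satisfies the orthogonality condition), the folded operator `S̃_p` on order filters of
`Y_{m,n−m+1}` equals `S_k ∘ S_{n+1−k} = S_{n+1−k} ∘ S_k`.  Here `S̃_p` is the operator
for the `J`-coloring `κ̃` at the orbit `p` (encoded by its minimum `k`). -/
theorem Sop_fold_orth (n m : ℕ) (hm : 1 ≤ m) (hmn : m ≤ n)
    (k : ℤ) (hk1 : 1 ≤ k) (hk2 : k + 2 ≤ (n : ℤ) + 1 - k)
    (F : Set (YD m (n - m + 1))) (hF : IsOrderFilter F) :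
    Sop (ytkappa n m (n - m + 1)) k F =
        Sop (ykappa m (n - m + 1)) k (Sop (ykappa m (n - m + 1)) ((n : ℤ) + 1 - k) F) ∧
      Sop (ytkappa n m (n - m + 1)) k F =
        Sop (ykappa m (n - m + 1)) ((n : ℤ) + 1 - k) (Sop (ykappa m (n - m + 1)) k F) :=
  Sop_fold_orth_general _ _ (by lia) (ytkappa_preimage_singleton (by lia))
    (isOrderSeparated_preimage_ykappa_pair hk2) hF
end
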